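/- Let (R,m) be a Cohen–Macaulay Noetherian local ring and let M and N be nonzero finitely generated Cohen–Macaulay R-modules. If dim(M ⊗_R N) + dim R ≤ dim M + dim N, then there exist elements x₁,…,x_n ∈ ann(N) (possibly n = 0) forming a regular sequence on both M and R such that N is a maximal Cohen–Macaulay module over R/(x₁,…,x_n), i.e., depth N = dim R − n. -/

import Mathlib

/-!
STATEMENT 7: Over a Cohen–Macaulay Noetherian local ring `R`, if `M`, `N` are nonzero finitely
generated Cohen–Macaulay modules with `dim (M ⊗_R N) + dim R ≤ dim M + dim N`, then there is a
sequence `x₁, …, x_n ∈ ann N` (possibly empty), regular on both `M` and `R`, with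
`depth N = dim R − n` (stated as `depth N + n = dim R`), i.e. `N` is maximal Cohen–Macaulay
over `R ⧸ (x₁, …, x_n)`.
-/

open scoped TensorProduct

universe u

/-- The Krull dimension of a commutative ring, valued in `WithBot ℕ∞`. -/
noncomputable def ringDim (R : Type u) [CommRing R] : WithBot ℕ∞ := ringKrullDim R

/-- The Krull dimension of a module `M`: the Krull dimension of `R ⧸ ann M`. -/
noncomputable def moduleDim (R : Type u) [CommRing R] (M : Type u) [AddCommGroup M]
    [Module R M] : WithBot ℕ∞ :=
  ringDim (R ⧸ Module.annihilator R M)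

/-- The depth of a module over a Noetherian local ring: the supremum of lengths of `M`-regular
sequences of elements of the maximal ideal. -/
noncomputable def moduleDepth (R : Type u) [CommRing R] [IsLocalRing R]
    (M : Type u) [AddCommGroup M] [Module R M] : ℕ∞ :=
  sSup {n : ℕ∞ | ∃ rs : List R, n = (rs.length : ℕ∞) ∧
    (∀ x ∈ rs, x ∈ IsLocalRing.maximalIdeal R) ∧ RingTheory.Sequence.IsRegular M rs}

open RingTheory.Sequence IsLocalRing
open scoped Pointwise

section Dimension

variable {R : Type*} [CommRing R] {K L : Type*} [AddCommGroup K] [Module R K]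
  [AddCommGroup L] [Module R L]

theorem Module.supportDim_le_of_support_subset
    (h : Module.support R K ⊆ Module.support R L) :
    Module.supportDim R K ≤ Module.supportDim R L :=
  Order.krullDim_le_of_strictMono (fun a ↦ ⟨a.1, h a.2⟩) fun {_ _} lt ↦ lt

theorem Module.support_inter_support_subset_support_tensorProduct
    [Module.Finite R K] [Module.Finite R L] :
    Module.support R K ∩ Module.support R L ⊆ Module.support R (K ⊗[R] L) := by
  rintro p ⟨hK, hL⟩
  rw [Module.mem_support_iff_nontrivial_residueField_tensorProduct] at hK hL ⊢
  have : Nontrivial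
      ((p.asIdeal.ResidueField ⊗[R] K) ⊗[p.asIdeal.ResidueField]
        (p.asIdeal.ResidueField ⊗[R] L)) :=
    inferInstance
  exact (TensorProduct.AlgebraTensorModule.distribBaseChange R p.asIdeal.ResidueField
    K L).toEquiv.nontrivial

theorem Module.supportDim_quotient_annihilator_smul_top_le_tensorProduct
    [Module.Finite R K] [Module.Finite R L] :
    Module.supportDim R (K ⧸ (Module.annihilator R L • ⊤ : Submodule R K)) ≤
      Module.supportDim R (K ⊗[R] L) := by
  apply Module.supportDim_le_of_support_subset
  rw [Module.support_quotient, ← Module.support_eq_zeroLocus]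
  exact Module.support_inter_support_subset_support_tensorProduct

end Dimension

theorem IsSMulRegular.notMem_of_mem_associatedPrimes {R : Type*} [CommRing R]
    [IsNoetherianRing R] {K : Type*} [AddCommGroup K] [Module R K] {x : R} (hx : IsSMulRegular K x)
    {P : Ideal R} (hP : P ∈ associatedPrimes R K) : x ∉ P := by
  intro hxP
  have : x ∈ ({r : R | IsSMulRegular K r}ᶜ : Set R) := by
    rw [← biUnion_associatedPrimes_eq_compl_regular]
    exact Set.mem_biUnion hP hxP
  exact this hx

/-- Let `a` and `x` be regular on `K`, with `a ∈ I`. If `I` contains a regular element on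
`K ⧸ aK`, then `I` lies in no associated prime of `K ⧸ xK`. -/
theorem not_le_of_mem_associatedPrimes_quotSMulTop {R : Type*} [CommRing R]
    [IsNoetherianRing R] {K : Type*} [AddCommGroup K] [Module R K] {I : Ideal R} {a x b : R}
    (ha : IsSMulRegular K a) (hx : IsSMulRegular K x) (haI : a ∈ I) (hbI : b ∈ I)
    (hb : IsSMulRegular (QuotSMulTop a K) b) :
    ∀ P ∈ associatedPrimes R (QuotSMulTop x K), ¬ I ≤ P := by
  intro P hP hIP
  obtain ⟨hprime, u, rfl⟩ := isAssociatedPrime_iff.mp hP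
  obtain ⟨u, rfl⟩ := Submodule.Quotient.mk_surjective _ u
  have key (r : R) (hr : r ∈ I) : ∃ w : K, x • w = r • u := by
    have := hIP hr
    rw [Submodule.mem_colon_singleton, Submodule.mem_bot, ← Submodule.Quotient.mk_smul,
      Submodule.Quotient.mk_eq_zero, Submodule.mem_smul_pointwise_iff_exists] at this
    obtain ⟨w, -, hw⟩ := this
    exact ⟨w, hw⟩
  obtain ⟨v, hv⟩ := key a haI
  obtain ⟨w, hw⟩ := key b hbI
  have hbv : b • v = a • w := hx (by
    simp only
    rw [smul_comm x b v, hv, smul_comm x a w, hw, smul_comm])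
  have hmem : v ∈ a • (⊤ : Submodule R K) :=
    mem_of_isSMulRegular_quotient_of_smul_mem hb
      (by rw [hbv]; exact Submodule.smul_mem_pointwise_smul _ _ _ Submodule.mem_top)
  obtain ⟨t, -, rfl⟩ := (Submodule.mem_smul_pointwise_iff_exists _ _ _).mp hmem
  have hu : x • t = u := ha (by
    simp only
    rw [← hv, smul_comm])
  apply hprime.ne_top
  rw [Ideal.eq_top_iff_one, Submodule.mem_colon_singleton, one_smul, Submodule.mem_bot,
    Submodule.Quotient.mk_eq_zero, ← hu]
  exact Submodule.smul_mem_pointwise_smul _ _ _ Submodule.mem_top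

section Avoidance

variable {R : Type*} [CommRing R] [IsNoetherianRing R]
  {K L : Type*} [AddCommGroup K] [Module R K] [Module.Finite R K]
  [AddCommGroup L] [Module R L] [Module.Finite R L]

theorem exists_mem_isSMulRegular_of_forall_associatedPrimes {I : Ideal R}
    (h : ∀ P ∈ associatedPrimes R K, ¬ I ≤ P) : ∃ x ∈ I, IsSMulRegular K x := by
  by_contra! hI
  obtain ⟨P, hP, hIP⟩ := (I.subset_union_prime_finite (associatedPrimes.finite R K)
    (f := id) 0 0 fun _ hP _ _ ↦ hP.isPrime).1 <| by
      simp only [id]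
      rw [biUnion_associatedPrimes_eq_compl_regular]
      exact hI
  exact h P hP hIP

theorem exists_mem_isSMulRegular_pair {I : Ideal R}
    (hK : ∀ P ∈ associatedPrimes R K, ¬ I ≤ P) (hL : ∀ P ∈ associatedPrimes R L, ¬ I ≤ P) :
    ∃ x ∈ I, IsSMulRegular K x ∧ IsSMulRegular L x := by
  obtain ⟨x, hxI, hx⟩ := exists_mem_isSMulRegular_of_forall_associatedPrimes
    (K := K × L) (I := I) fun P hP ↦ by
      rw [associatedPrimes.prod] at hP
      exact hP.elim (hK P) (hL P)
  exact ⟨x, hxI, hx.of_injective (LinearMap.inl R K L) LinearMap.inl_injective,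
    hx.of_injective (LinearMap.inr R K L) LinearMap.inr_injective⟩

end Avoidance

section Local

variable {R : Type*} [CommRing R] [IsLocalRing R] [IsNoetherianRing R]

theorem isSMulRegular_quotSMulTop_comm {K : Type*} [AddCommGroup K] [Module R K]
    [Module.Finite R K] {a y : R} (hym : y ∈ maximalIdeal R) (ham : a ∈ maximalIdeal R)
    (ha : IsSMulRegular K a) (hy : IsSMulRegular (QuotSMulTop a K) y) :
    IsSMulRegular K y ∧ IsSMulRegular (QuotSMulTop y K) a := by
  have h : IsWeaklyRegular K [a, y] :=
    .cons ha ((isWeaklyRegular_singleton_iff _ _).mpr hy)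
  have h' := isWeaklyRegular_of_perm_of_subset_maximalIdeal h (List.Perm.swap y a [])
    (by simpa using ⟨ham, hym⟩)
  rw [isWeaklyRegular_cons_iff, isWeaklyRegular_singleton_iff] at h'
  exact h'

/-- Any regular element can start a regular sequence of a given attained length. -/
theorem exists_isRegular_quotSMulTop {K : Type*} [AddCommGroup K] [Module R K]
    [Module.Finite R K] {rs : List R} (hrs : ∀ r ∈ rs, r ∈ maximalIdeal R)
    (hreg : IsRegular K rs) {x : R} (hxm : x ∈ maximalIdeal R) (hx : IsSMulRegular K x)
    {n : ℕ} (hn : rs.length = n + 1) :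
    ∃ ys : List R, (∀ y ∈ ys, y ∈ maximalIdeal R) ∧ IsRegular (QuotSMulTop x K) ys ∧
      ys.length = n := by
  induction n generalizing K rs x with
  | zero =>
    have := hreg.nontrivial
    have := nontrivial_quotSMulTop_of_mem_maximalIdeal (L := K) hxm
    exact ⟨[], by simp, .nil R _, rfl⟩
  | succ n ih =>
    obtain _ | ⟨a, rs⟩ := rs
    · simp at hn
    obtain _ | ⟨b, rs⟩ := rs
    · simp at hn
    have ham : a ∈ maximalIdeal R := hrs a (by simp)
    have hbm : b ∈ maximalIdeal R := hrs b (by simp)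
    obtain ⟨ha, hreg'⟩ := (isRegular_cons_iff K a _).mp hreg
    have hb := ((isRegular_cons_iff _ b _).mp hreg').1
    obtain ⟨y, hym, hyx, hya⟩ := exists_mem_isSMulRegular_pair (I := maximalIdeal R)
      (not_le_of_mem_associatedPrimes_quotSMulTop ha hx ham hbm hb)
      (fun P hP hle ↦ hb.notMem_of_mem_associatedPrimes hP (hle hbm))
    obtain ⟨zs, hzm, hz, hzlen⟩ := ih (fun r hr ↦ hrs r (by simp [hr])) hreg' hym hya
      (by simpa using hn)
    have haz : IsRegular (QuotSMulTop y K) (a :: zs) :=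
      ((isRegular_cons_iff K y _).mp (isRegular_of_perm (IsRegular.cons ha (.cons hya hz))
        (List.Perm.swap y a zs))).2
    have hy := isSMulRegular_quotSMulTop_comm hym hxm hx hyx
    obtain ⟨ws, hwm, hw, hwlen⟩ := ih (x := x) (List.forall_mem_cons.mpr ⟨ham, hzm⟩) haz hxm
      hy.2 (by simp [hzlen])
    have hyw : IsRegular (QuotSMulTop x K) (y :: ws) :=
      ((isRegular_cons_iff K x _).mp (isRegular_of_perm (IsRegular.cons hy.1 (.cons hy.2 hw))
        (List.Perm.swap x y ws))).2
    exact ⟨y :: ws, List.forall_mem_cons.mpr ⟨hym, hwm⟩, hyw, by simp [hwlen]⟩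

theorem exists_mem_associatedPrimes_quotSMulTop {K : Type*} [AddCommGroup K] [Module R K]
    [Module.Finite R K] {x : R} (hxm : x ∈ maximalIdeal R) (hx : IsSMulRegular K x)
    {P : Ideal R} (hP : P ∈ associatedPrimes R K) :
    ∃ Q ∈ associatedPrimes R (QuotSMulTop x K), P ≤ Q ∧ x ∈ Q := by
  obtain ⟨hprime, u, hu⟩ := isAssociatedPrime_iff.mp hP
  let T : Submodule R K := Submodule.torsionBySet R K P
  have huT : u ∈ T := by
    rw [Submodule.mem_torsionBySet_iff]
    rintro ⟨r, hr⟩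
    simpa [hu, Submodule.mem_colon_singleton] using hr
  have hu0 : u ≠ 0 := by
    rintro rfl
    apply hprime.ne_top
    rw [hu, Ideal.eq_top_iff_one, Submodule.mem_colon_singleton]
    simp
  have hT : ¬ T ≤ x • (⊤ : Submodule R K) := by
    intro hle
    have : T ≤ Ideal.span {x} • T := by
      rw [Submodule.ideal_span_singleton_smul]
      intro k hk
      obtain ⟨t, -, rfl⟩ := (Submodule.mem_smul_pointwise_iff_exists _ _ _).mp (hle hk)
      refine Submodule.smul_mem_pointwise_smul _ _ _ ?_
      rw [Submodule.mem_torsionBySet_iff] at hk ⊢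
      intro r
      apply hx
      simpa [smul_comm x] using hk r
    have hbot := Submodule.eq_bot_of_le_smul_of_le_jacobson_bot _ T (IsNoetherian.noetherian T)
      this (by
        rw [IsLocalRing.jacobson_eq_maximalIdeal _ bot_ne_top, Ideal.span_singleton_le_iff_mem]
        exact hxm)
    rw [hbot] at huT
    exact hu0 (by simpa using huT)
  obtain ⟨k, hkT, hk⟩ := SetLike.not_le_iff_exists.mp hT
  obtain ⟨Q, hQ, hle⟩ := exists_le_isAssociatedPrime_of_isNoetherianRing R
    (Submodule.Quotient.mk k : QuotSMulTop x K)
    (by rwa [Ne, Submodule.Quotient.mk_eq_zero])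
  refine ⟨Q, hQ, fun r hr ↦ hle ?_, hle ?_⟩
  · rw [Submodule.mem_torsionBySet_iff] at hkT
    rw [Submodule.mem_colon_singleton, ← Submodule.Quotient.mk_smul, hkT ⟨r, hr⟩]
    simp
  · rw [Submodule.mem_colon_singleton, Submodule.mem_bot, ← Submodule.Quotient.mk_smul,
      Submodule.Quotient.mk_eq_zero]
    exact Submodule.smul_mem_pointwise_smul _ _ _ Submodule.mem_top

/-- The length of a regular sequence is at most the dimension of each associated prime. -/
theorem length_le_supportDim_quotient_of_mem_associatedPrimes {K : Type*} [AddCommGroup K]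
    [Module R K] [Module.Finite R K] {rs : List R} (hrs : ∀ r ∈ rs, r ∈ maximalIdeal R)
    (hreg : IsRegular K rs) {P : Ideal R} (hP : P ∈ associatedPrimes R K) :
    (rs.length : WithBot ℕ∞) ≤ Module.supportDim R (R ⧸ P) := by
  induction rs generalizing K P with
  | nil =>
    have := Ideal.Quotient.nontrivial_iff.mpr hP.isPrime.ne_top
    rw [Module.supportDim_quotient_eq_ringKrullDim]
    simpa using ringKrullDim_nonneg_of_nontrivial
  | cons x rs ih =>
    obtain ⟨hx, hreg'⟩ := (isRegular_cons_iff K x _).mp hreg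
    have hxm : x ∈ maximalIdeal R := hrs x (by simp)
    obtain ⟨Q, hQ, hPQ, hxQ⟩ := exists_mem_associatedPrimes_quotSMulTop hxm hx hP
    have h1 := ih (fun r hr ↦ hrs r (by simp [hr])) hreg' hQ
    have h2 : Module.supportDim R (R ⧸ Q) ≤
        Module.supportDim R (QuotSMulTop x (R ⧸ P)) := by
      apply Module.supportDim_le_of_support_subset
      rw [Module.support_quotSMulTop, Module.support_eq_zeroLocus, Module.support_eq_zeroLocus,
        Ideal.annihilator_quotient, Ideal.annihilator_quotient]
      exact Set.subset_inter (PrimeSpectrum.zeroLocus_anti_mono hPQ)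
        (PrimeSpectrum.zeroLocus_anti_mono (by simpa using hxQ))
    have h3 := Module.supportDim_quotSMulTop_succ_le_of_notMem_minimalPrimes (R := R)
      (M := R ⧸ P) (x := x) (by
        have := hP.isPrime
        rw [Ideal.annihilator_quotient, Ideal.minimalPrimes_eq_subsingleton_self]
        simpa using hx.notMem_of_mem_associatedPrimes hP)
    push_cast [List.length_cons]
    exact (add_le_add_left (h1.trans h2) 1).trans h3

/-- An ideal cutting down the dimension of a Cohen–Macaulay module lies in no associated prime. -/
theorem not_le_of_mem_associatedPrimes_of_supportDim_lt {K : Type*} [AddCommGroup K]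
    [Module R K] [Module.Finite R K] {rs : List R} (hrs : ∀ r ∈ rs, r ∈ maximalIdeal R)
    (hreg : IsRegular K rs) {I : Ideal R}
    (h : Module.supportDim R (K ⧸ (I • ⊤ : Submodule R K)) < rs.length) :
    ∀ P ∈ associatedPrimes R K, ¬ I ≤ P := by
  intro P hP hIP
  refine absurd h (not_lt.mpr
    ((length_le_supportDim_quotient_of_mem_associatedPrimes hrs hreg hP).trans ?_))
  apply Module.supportDim_le_of_support_subset
  rw [Module.support_quotient, Module.support_eq_zeroLocus, Module.support_eq_zeroLocus,
    Ideal.annihilator_quotient]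
  refine Set.subset_inter (PrimeSpectrum.zeroLocus_anti_mono ?_)
    (PrimeSpectrum.zeroLocus_anti_mono hIP)
  rw [SetLike.coe_subset_coe, ← Submodule.annihilator_top]
  exact IsAssociatedPrime.annihilator_le hP

theorem exists_isRegular_quotSMulTop_supportDim {K : Type*} [AddCommGroup K]
    [Module R K] [Module.Finite R K] {rs : List R} (hrs : ∀ r ∈ rs, r ∈ maximalIdeal R)
    (hreg : IsRegular K rs) {I : Ideal R} {n : ℕ}
    (hI : I ≤ maximalIdeal R)
    (h : Module.supportDim R (K ⧸ (I • ⊤ : Submodule R K)) + (n + 1 : ℕ) ≤ rs.length)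
    {x : R} (hxI : x ∈ I) (hx : IsSMulRegular K x) :
    ∃ ys : List R, (∀ y ∈ ys, y ∈ maximalIdeal R) ∧ IsRegular (QuotSMulTop x K) ys ∧
      Module.supportDim R
        (QuotSMulTop x K ⧸ (I • ⊤ : Submodule R (QuotSMulTop x K))) + n ≤ ys.length := by
  have := hreg.nontrivial
  have hle : Module.supportDim R (QuotSMulTop x K ⧸ (I • ⊤ : Submodule R (QuotSMulTop x K))) ≤
      Module.supportDim R (K ⧸ (I • ⊤ : Submodule R K)) := by
    apply Module.supportDim_le_of_support_subset
    rw [Module.support_quotient, Module.support_quotient, Module.support_quotSMulTop]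
    exact Set.inter_subset_inter_left _ Set.inter_subset_left
  cases hlen : rs.length with
  | zero =>
    have : Nontrivial (K ⧸ (I • ⊤ : Submodule R K)) := by
      apply Submodule.Quotient.nontrivial_iff.mpr (Ne.symm _)
      exact Submodule.top_ne_ideal_smul_of_le_jacobson_annihilator
        (hI.trans (maximalIdeal_le_jacobson _))
    have h0 : (0 : WithBot ℕ∞) ≤ Module.supportDim R (K ⧸ (I • ⊤ : Submodule R K)) := by
      have := Module.nonempty_support_of_nontrivial (R := R)
        (M := K ⧸ (I • ⊤ : Submodule R K)) |>.to_subtype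
      exact Order.krullDim_nonneg
    have h1 := (add_le_add_left h0 ((n + 1 : ℕ) : WithBot ℕ∞)).trans h
    rw [hlen, zero_add] at h1
    have : n + 1 ≤ 0 := by exact_mod_cast h1
    omega
  | succ m =>
    obtain ⟨ys, hym, hy, hylen⟩ := exists_isRegular_quotSMulTop hrs hreg (hI hxI) hx hlen
    refine ⟨ys, hym, hy, ?_⟩
    rw [hlen] at h
    push_cast at h
    rw [← add_assoc, ENat.WithBot.add_le_add_one_right_iff] at h
    rw [hylen]
    exact (add_le_add_left hle _).trans h

/-- If `K` and `L` are Cohen–Macaulay and the ideal `I` cuts down both dimensions by at least `n`,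
then `I` contains a sequence of length `n` regular on both. -/
theorem exists_isRegular_pair {K L : Type*} [AddCommGroup K] [Module R K] [Module.Finite R K]
    [AddCommGroup L] [Module R L] [Module.Finite R L] {I : Ideal R} (hI : I ≤ maximalIdeal R)
    {rs ss : List R} (hrs : ∀ r ∈ rs, r ∈ maximalIdeal R) (hss : ∀ s ∈ ss, s ∈ maximalIdeal R)
    (hK : IsRegular K rs) (hL : IsRegular L ss) {n : ℕ}
    (hKI : Module.supportDim R (K ⧸ (I • ⊤ : Submodule R K)) + n ≤ rs.length)
    (hLI : Module.supportDim R (L ⧸ (I • ⊤ : Submodule R L)) + n ≤ ss.length) :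
    ∃ xs : List R, (∀ x ∈ xs, x ∈ I) ∧ IsRegular K xs ∧ IsRegular L xs ∧ xs.length = n := by
  induction n generalizing K L rs ss with
  | zero =>
    have := hK.nontrivial
    have := hL.nontrivial
    exact ⟨[], by simp, .nil R _, .nil R _, rfl⟩
  | succ n ih =>
    have lt_of_add_le {a : WithBot ℕ∞} {m : ℕ} (h : a + (n + 1 : ℕ) ≤ m) : a < m := by
      cases a using WithBot.recBotCoe with
      | bot => exact WithBot.bot_lt_coe _
      | coe a =>
        cases a using ENat.recTopCoe with
        | top =>
          have : (⊤ : ℕ∞) + ((n + 1 : ℕ) : ℕ∞) ≤ m := WithBot.coe_le_coe.mp h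
          simp at this
        | coe a =>
          have : a + (n + 1) ≤ m := by exact_mod_cast h
          have : a < m := by omega
          exact_mod_cast this
    obtain ⟨x, hxI, hxK, hxL⟩ := exists_mem_isSMulRegular_pair
      (not_le_of_mem_associatedPrimes_of_supportDim_lt hrs hK (lt_of_add_le hKI))
      (not_le_of_mem_associatedPrimes_of_supportDim_lt hss hL (lt_of_add_le hLI))
    obtain ⟨rs', hrs', hK', hKI'⟩ :=
      exists_isRegular_quotSMulTop_supportDim hrs hK hI hKI hxI hxK
    obtain ⟨ss', hss', hL', hLI'⟩ :=
      exists_isRegular_quotSMulTop_supportDim hss hL hI hLI hxI hxL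
    obtain ⟨xs, hxsI, hxsK, hxsL, hlen⟩ := ih hrs' hss' hK' hL' hKI' hLI'
    exact ⟨x :: xs, by simpa [hxI] using hxsI, .cons hxK hxsK, .cons hxL hxsL, by simp [hlen]⟩

end Local

section Depth

variable {R : Type u} [CommRing R]

theorem moduleDim_eq_supportDim (K : Type u) [AddCommGroup K] [Module R K] [Module.Finite R K] :
    moduleDim R K = Module.supportDim R K :=
  (Module.supportDim_eq_ringKrullDim_quotient_annihilator R K).symm

variable [IsLocalRing R]

theorem exists_isRegular_length_eq_moduleDepth {K : Type u} [AddCommGroup K] [Module R K]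
    [Nontrivial K] (h : moduleDepth R K < ⊤) :
    ∃ rs : List R, (∀ r ∈ rs, r ∈ maximalIdeal R) ∧ IsRegular K rs ∧
      moduleDepth R K = rs.length := by
  have : Nonempty {n : ℕ∞ | ∃ rs : List R, n = (rs.length : ℕ∞) ∧
      (∀ x ∈ rs, x ∈ maximalIdeal R) ∧ IsRegular K rs} :=
    ⟨0, [], by simp, by simp, .nil R K⟩
  obtain ⟨rs, hlen, hrs, hreg⟩ := ENat.sSup_mem_of_nonempty_of_lt_top h
  exact ⟨rs, hrs, hreg, hlen⟩

theorem exists_isRegular_length_eq_supportDim [IsNoetherianRing R] {K : Type u} [AddCommGroup K]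
    [Module R K] [Module.Finite R K] [Nontrivial K]
    (h : (moduleDepth R K : WithBot ℕ∞) = moduleDim R K) :
    ∃ rs : List R, (∀ r ∈ rs, r ∈ maximalIdeal R) ∧ IsRegular K rs ∧
      moduleDepth R K = rs.length ∧ moduleDim R K = rs.length := by
  have hlt : moduleDepth R K < ⊤ := by
    rw [← WithBot.coe_lt_coe, h, moduleDim_eq_supportDim]
    exact (Module.supportDim_le_ringKrullDim R K).trans_lt ringKrullDim_lt_top
  obtain ⟨rs, hrs, hreg, hlen⟩ := exists_isRegular_length_eq_moduleDepth hlt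
  refine ⟨rs, hrs, hreg, hlen, ?_⟩
  rw [← h, hlen]
  rfl

end Depth

theorem stmt_7 (R : Type u) [CommRing R] [IsLocalRing R] [IsNoetherianRing R]
    (hR : (moduleDepth R R : WithBot ℕ∞) = ringDim R)
    (M N : Type u) [AddCommGroup M] [Module R M] [AddCommGroup N] [Module R N]
    [Module.Finite R M] [Module.Finite R N] [Nontrivial M] [Nontrivial N]
    (hCM_M : (moduleDepth R M : WithBot ℕ∞) = moduleDim R M)
    (hCM_N : (moduleDepth R N : WithBot ℕ∞) = moduleDim R N)
    (hdim : moduleDim R (M ⊗[R] N) + ringDim R ≤ moduleDim R M + moduleDim R N) :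
    ∃ xs : List R, (∀ x ∈ xs, x ∈ Module.annihilator R N) ∧
      RingTheory.Sequence.IsRegular M xs ∧ RingTheory.Sequence.IsRegular R xs ∧
      ((moduleDepth R N + (xs.length : ℕ∞) : ℕ∞) : WithBot ℕ∞) = ringDim R := by
  have hRdim : moduleDim R R = ringDim R :=
    (moduleDim_eq_supportDim R).trans (Module.supportDim_self_eq_ringKrullDim R)
  obtain ⟨rs, hrs, hregR, -, hRlen⟩ :=
    exists_isRegular_length_eq_supportDim (hR.trans hRdim.symm)
  obtain ⟨ms, hms, hregM, -, hMlen⟩ := exists_isRegular_length_eq_supportDim hCM_M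
  obtain ⟨ns, -, -, hNdepth, hNlen⟩ := exists_isRegular_length_eq_supportDim hCM_N
  rw [hRdim] at hRlen
  have hle : ns.length ≤ rs.length := by
    have := Module.supportDim_le_ringKrullDim R N
    rw [← moduleDim_eq_supportDim, hNlen, ← ringDim, hRlen] at this
    exact_mod_cast this
  obtain ⟨n, hn⟩ := Nat.exists_eq_add_of_le hle
  have hI : Module.annihilator R N ≤ maximalIdeal R :=
    le_maximalIdeal (by rwa [Ne, Module.annihilator_eq_top_iff, not_subsingleton_iff_nontrivial])
  have hMI : Module.supportDim R (M ⧸ (Module.annihilator R N • ⊤ : Submodule R M)) + n ≤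
      ms.length := by
    rw [hRlen, hMlen, hNlen, hn, moduleDim_eq_supportDim, Nat.add_comm, Nat.cast_add,
      ← add_assoc, ENat.WithBot.add_le_add_natCast_right_iff] at hdim
    exact (add_le_add_left
      Module.supportDim_quotient_annihilator_smul_top_le_tensorProduct _).trans hdim
  have hRI : Module.supportDim R (R ⧸ (Module.annihilator R N • ⊤ : Submodule R R)) + n ≤
      rs.length := by
    have : Module.supportDim R (R ⧸ (Module.annihilator R N • ⊤ : Submodule R R)) ≤
        moduleDim R N := by
      rw [moduleDim_eq_supportDim]
      apply Module.supportDim_le_of_support_subset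
      rw [Module.support_quotient, ← Module.support_eq_zeroLocus]
      exact Set.inter_subset_right
    rw [hn, Nat.cast_add, ← hNlen]
    exact add_le_add_left this _
  obtain ⟨xs, hxs, hxM, hxR, hlen⟩ := exists_isRegular_pair hI hms hrs hregM hregR hMI hRI
  refine ⟨xs, hxs, hxM, hxR, ?_⟩
  rw [hRlen, hNdepth, hlen, hn]
  rfl
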